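/- Let Δ > 0, α > 0, l > 0, and let x₁, …, x_N ∈ ℝ^d satisfy ‖x_i‖₂ ≤ l for all i. Define V₀ := l² I and V_i := V_{i−1} + x_i x_iᵀ for i = 1, …, N. If Δ ≤ 2α · min( 1, √( x_iᵀ V_{i−1}⁻¹ x_i ) ) for every i = 1, …, N, then N ≤ (8 α² / Δ²) · d · log( (d + N) / d ). (Count bound for suboptimal pulls derived from the elliptical potential lemma via Cauchy–Schwarz, core of Lemma 9.) -/

import Mathlib

open Matrix Finset Real

/-!
By the matrix determinant lemma each update multiplies `det V` by `1 + q_i`, where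
`q_i = x_iᵀ V_{i-1}⁻¹ x_i`, so `∑ log (1 + q_i) = log det V_N - log det V_0`. AM-GM on the
eigenvalues bounds `log det V_N` through the trace of `V_N`, which grows by at most the squared norm
bound per step, and `min 1 q ≤ 2 log (1 + q)` turns this into a bound on `∑ min 1 q_i` (the
elliptical potential lemma). The gap assumption makes every summand at least `Δ² / (4 α²)`.
-/

lemma min_one_le_two_mul_log_one_add {u : ℝ} (hu : 0 ≤ u) : min 1 u ≤ 2 * log (1 + u) := by
  have min_le_div : min 1 u ≤ 2 * (2 * u / (u + 2)) := by
    rw [← mul_div_assoc, le_div_iff₀ (by positivity)]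
    rcases le_total 1 u with h | h
    · rw [min_eq_left h]
      linarith
    · rw [min_eq_right h]
      nlinarith
  linarith [le_log_one_add_of_nonneg hu]

lemma sq_min_one_sqrt {u : ℝ} (hu : 0 ≤ u) : min 1 √u ^ 2 = min 1 u := by
  rcases le_total 1 u with h | h
  · rw [min_eq_left h, min_eq_left (one_le_sqrt.2 h), one_pow]
  · rw [min_eq_right h, min_eq_right (sqrt_le_one.2 h), sq_sqrt hu]

section Determinant

variable {n : Type*} [Fintype n] [DecidableEq n]

lemma det_add_vecMulVec {R : Type*} [CommRing R] {A : Matrix n n R} (hA : IsUnit A.det)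
    (u v : n → R) : (A + vecMulVec u v).det = A.det * (1 + v ⬝ᵥ (A⁻¹ *ᵥ u)) := by
  rw [vecMulVec_eq Unit, det_add_replicateCol_mul_replicateRow hA, Matrix.mul_assoc,
    ← replicateCol_mulVec, det_unique (n := Unit), Matrix.add_apply, one_apply_eq,
    replicateRow_mul_replicateCol_apply]

lemma log_det_le_card_mul_log_trace_div_card {A : Matrix n n ℝ} (hA : A.PosDef) :
    log A.det ≤ Fintype.card n * log (A.trace / Fintype.card n) := by
  cases isEmpty_or_nonempty n
  · simp
  set ev := hA.isHermitian.eigenvalues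
  have det_eq : A.det = ∏ i, ev i := by simpa using hA.isHermitian.det_eq_prod_eigenvalues
  have trace_eq : A.trace = ∑ i, ev i := by simpa using hA.isHermitian.trace_eq_sum_eigenvalues
  have jensen := strictConcaveOn_log_Ioi.concaveOn.le_map_sum (t := univ)
    (w := fun _ : n ↦ (Fintype.card n : ℝ)⁻¹) (p := ev) (fun _ _ ↦ by positivity) (by simp)
    (fun i _ ↦ hA.eigenvalues_pos i)
  simp only [smul_eq_mul, ← mul_sum] at jensen
  rwa [det_eq, trace_eq, log_prod fun i _ ↦ (hA.eigenvalues_pos i).ne', div_eq_inv_mul,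
    ← inv_mul_le_iff₀ (by positivity)]

end Determinant

section DesignMatrix

variable {n : Type*}

/-- The design matrix `V_k = V₀ + x₁ x₁ᵀ + ⋯ + x_k x_kᵀ` of the first `k` feature vectors, with
regularizer `V₀`. The vectors are indexed from `1`, so `x 0` never enters. -/
def designMatrix (V₀ : Matrix n n ℝ) (x : ℕ → n → ℝ) (k : ℕ) : Matrix n n ℝ :=
  V₀ + ∑ τ ∈ Icc 1 k, vecMulVec (x τ) (x τ)

lemma designMatrix_zero (V₀ : Matrix n n ℝ) (x : ℕ → n → ℝ) : designMatrix V₀ x 0 = V₀ := by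
  simp [designMatrix]

lemma designMatrix_succ (V₀ : Matrix n n ℝ) (x : ℕ → n → ℝ) (k : ℕ) :
    designMatrix V₀ x (k + 1) = designMatrix V₀ x k + vecMulVec (x (k + 1)) (x (k + 1)) := by
  rw [designMatrix, sum_Icc_succ_top (by lia), ← add_assoc, designMatrix]

variable {V₀ : Matrix n n ℝ}

lemma posDef_designMatrix [Finite n] (hV₀ : V₀.PosDef) (x : ℕ → n → ℝ) (k : ℕ) :
    (designMatrix V₀ x k).PosDef :=
  hV₀.add_posSemidef <| posSemidef_sum _ fun i _ ↦ by
    simpa using posSemidef_vecMulVec_self_star (x i)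

variable [Fintype n]

lemma trace_designMatrix_le {N : ℕ} {L : ℝ} {x : ℕ → n → ℝ}
    (hx : ∀ i ∈ Icc 1 N, x i ⬝ᵥ x i ≤ L) :
    (designMatrix V₀ x N).trace ≤ V₀.trace + N * L := by
  have sum_le : ∑ i ∈ Icc 1 N, x i ⬝ᵥ x i ≤ N * L := by simpa using sum_le_sum hx
  simpa [designMatrix, trace_sum, trace_vecMulVec] using sum_le

variable [DecidableEq n]

lemma dotProduct_inv_designMatrix_mulVec_nonneg (hV₀ : V₀.PosDef) (x : ℕ → n → ℝ) (k : ℕ)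
    (v : n → ℝ) : 0 ≤ v ⬝ᵥ ((designMatrix V₀ x k)⁻¹ *ᵥ v) := by
  simpa using (posDef_designMatrix hV₀ x k).inv.posSemidef.dotProduct_mulVec_nonneg v

lemma log_det_designMatrix (hV₀ : V₀.PosDef) (x : ℕ → n → ℝ) (N : ℕ) :
    log (designMatrix V₀ x N).det = log V₀.det +
      ∑ i ∈ Icc 1 N, log (1 + x i ⬝ᵥ ((designMatrix V₀ x (i - 1))⁻¹ *ᵥ x i)) := by
  induction N with
  | zero => simp [designMatrix_zero]
  | succ k ih =>
    have det_ne_zero := (posDef_designMatrix hV₀ x k).det_pos.ne'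
    have quadForm_nonneg := dotProduct_inv_designMatrix_mulVec_nonneg hV₀ x k (x (k + 1))
    rw [designMatrix_succ, det_add_vecMulVec det_ne_zero.isUnit,
      log_mul det_ne_zero (by positivity), ih, sum_Icc_succ_top (by lia), Nat.add_sub_cancel,
      add_assoc]

lemma sum_min_one_le_two_mul_log_det_sub (hV₀ : V₀.PosDef) (x : ℕ → n → ℝ) (N : ℕ) :
    ∑ i ∈ Icc 1 N, min 1 (x i ⬝ᵥ ((designMatrix V₀ x (i - 1))⁻¹ *ᵥ x i)) ≤
      2 * (log (designMatrix V₀ x N).det - log V₀.det) := by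
  rw [log_det_designMatrix hV₀, add_sub_cancel_left, mul_sum]
  exact sum_le_sum fun i _ ↦ min_one_le_two_mul_log_one_add
    (dotProduct_inv_designMatrix_mulVec_nonneg hV₀ x (i - 1) (x i))

lemma log_det_designMatrix_le (hV₀ : V₀.PosDef) {N : ℕ} {L : ℝ} {x : ℕ → n → ℝ}
    (hx : ∀ i ∈ Icc 1 N, x i ⬝ᵥ x i ≤ L) :
    log (designMatrix V₀ x N).det ≤
      Fintype.card n * log ((V₀.trace + N * L) / Fintype.card n) := by
  cases isEmpty_or_nonempty n
  · simp
  have hV := posDef_designMatrix hV₀ x N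
  have trace_pos := hV.trace_pos
  refine (log_det_le_card_mul_log_trace_div_card hV).trans ?_
  gcongr
  exact trace_designMatrix_le hx

theorem elliptical_potential_le {lam : ℝ} (hlam : 0 < lam) {N : ℕ} {L : ℝ} {x : ℕ → n → ℝ}
    (hx : ∀ i ∈ Icc 1 N, x i ⬝ᵥ x i ≤ L) :
    ∑ i ∈ Icc 1 N, min 1 (x i ⬝ᵥ ((designMatrix (lam • 1) x (i - 1))⁻¹ *ᵥ x i)) ≤
      2 * (Fintype.card n * log ((Fintype.card n + N * (L / lam)) / Fintype.card n)) := by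
  have hV₀ : (lam • 1 : Matrix n n ℝ).PosDef := PosDef.one.smul hlam
  refine (sum_min_one_le_two_mul_log_det_sub hV₀ x N).trans ?_
  gcongr
  cases isEmpty_or_nonempty n
  · simp
  have trace_eq : (lam • 1 : Matrix n n ℝ).trace + N * L =
      (Fintype.card n + N * (L / lam)) * lam := by
    rw [trace_smul, trace_one, smul_eq_mul]
    field_simp
  have scaled_trace_pos : 0 < Fintype.card n + N * (L / lam) := by
    have trace_bound_pos := (posDef_designMatrix hV₀ x N).trace_pos.trans_le
      (trace_designMatrix_le hx)
    exact pos_of_mul_pos_left (trace_eq ▸ trace_bound_pos) hlam.le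
  calc log (designMatrix (lam • 1) x N).det - log (lam • 1 : Matrix n n ℝ).det
      ≤ Fintype.card n * log ((Fintype.card n + N * (L / lam)) * lam / Fintype.card n)
          - Fintype.card n * log lam := by
        rw [det_smul, det_one, mul_one, log_pow, ← trace_eq]
        gcongr
        exact log_det_designMatrix_le hV₀ hx
    _ = Fintype.card n * log ((Fintype.card n + N * (L / lam)) / Fintype.card n) := by
        rw [mul_div_right_comm, log_mul (by positivity) hlam.ne']
        ring

end DesignMatrix

theorem stmt_13_general {n : Type*} [Fintype n] [DecidableEq n] {N : ℕ} {Δ α lam L : ℝ}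
    (hΔ : 0 < Δ) (hlam : 0 < lam) {x : ℕ → n → ℝ} (hx : ∀ i ∈ Icc 1 N, x i ⬝ᵥ x i ≤ L)
    (hgap : ∀ i ∈ Icc 1 N,
      Δ ≤ 2 * α * min 1 √(x i ⬝ᵥ ((designMatrix (lam • 1) x (i - 1))⁻¹ *ᵥ x i))) :
    (N : ℝ) ≤ 8 * α ^ 2 / Δ ^ 2 * Fintype.card n *
      log ((Fintype.card n + N * (L / lam)) / Fintype.card n) := by
  set q : ℕ → ℝ := fun i ↦ x i ⬝ᵥ ((designMatrix (lam • 1) x (i - 1))⁻¹ *ᵥ x i)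
  have sq_gap_le : ∀ i ∈ Icc 1 N, Δ ^ 2 ≤ 4 * α ^ 2 * min 1 (q i) := fun i hi ↦ by
    have q_nonneg : 0 ≤ q i :=
      dotProduct_inv_designMatrix_mulVec_nonneg (PosDef.one.smul hlam) x (i - 1) (x i)
    calc Δ ^ 2 ≤ (2 * α * min 1 √(q i)) ^ 2 := by gcongr; exact hgap i hi
      _ = 4 * α ^ 2 * min 1 (q i) := by
        rw [mul_pow, sq_min_one_sqrt q_nonneg]
        ring
  have mul_sq_gap_le : N * Δ ^ 2 ≤ 4 * α ^ 2 * ∑ i ∈ Icc 1 N, min 1 (q i) := by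
    simpa [mul_sum] using sum_le_sum sq_gap_le
  have potential_le := mul_le_mul_of_nonneg_left (elliptical_potential_le hlam hx)
    (by positivity : 0 ≤ 4 * α ^ 2)
  rw [mul_assoc, div_mul_eq_mul_div, le_div_iff₀ (by positivity)]
  linarith

/-- Count bound for suboptimal pulls (core of Lemma 9): with `V₀ = l² I`,
`V_i = V_{i−1} + x_i x_iᵀ`, `‖x_i‖₂ ≤ l`, if `Δ ≤ 2α·min(1, √(x_iᵀ V_{i−1}⁻¹ x_i))`
for every `i = 1,…,N`, then `N ≤ (8α²/Δ²)·d·log((d+N)/d)`. -/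
theorem stmt_13 (d N : ℕ) (Δ α l : ℝ) (hΔ : 0 < Δ) (hα : 0 < α) (hl : 0 < l)
    (x : ℕ → Fin d → ℝ)
    (hx : ∀ i ∈ Finset.Icc 1 N, Real.sqrt (∑ k, x i k ^ 2) ≤ l) :
    let V : ℕ → Matrix (Fin d) (Fin d) ℝ := fun k =>
      l ^ 2 • (1 : Matrix (Fin d) (Fin d) ℝ)
        + ∑ τ ∈ Finset.Icc 1 k, Matrix.vecMulVec (x τ) (x τ)
    (∀ i ∈ Finset.Icc 1 N,
      Δ ≤ 2 * α * min 1 (Real.sqrt (x i ⬝ᵥ ((V (i - 1))⁻¹ *ᵥ x i)))) →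
    (N : ℝ) ≤ 8 * α ^ 2 / Δ ^ 2 * d * Real.log ((d + N) / d) := by
  intro V hgap
  have sq_norm_le : ∀ i ∈ Icc 1 N, x i ⬝ᵥ x i ≤ l ^ 2 := fun i hi ↦ by
    simpa only [dotProduct, sq] using (sqrt_le_left hl.le).1 (hx i hi)
  simpa [hl.ne'] using stmt_13_general hΔ (pow_pos hl 2) sq_norm_le hgap
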